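/- Amplifying a hierarchical constellation does not decrease any conditional per-bit low-priority mutual information at a fixed high-priority label: for every ρ ≥ 1, every noise variance σ² > 0, every index 1 ≤ j ≤ m_L, and every b_H ∈ {0,1}^{m_H}, one has I(B_L^j ; ρZ + N | B_H = b_H) ≥ I(B_L^j ; Z + N | B_H = b_H), where the mutual informations are computed under the conditional probability measure given B_H = b_H and N is a complex Gaussian noise of variance σ² independent of the labels. -/

import Mathlib

open MeasureTheory ProbabilityTheory
open scoped ENNReal NNReal

/-- The centered complex Gaussian law of variance `v`: real and imaginary parts are independent
centered real Gaussians of variance `v/2`. -/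
noncomputable def complexGaussian (v : ℝ≥0) : Measure ℂ :=
  ((gaussianReal 0 (v / 2)).prod (gaussianReal 0 (v / 2))).map
    (fun p => (p.1 : ℂ) + (p.2 : ℂ) * Complex.I)

/-- Kullback-Leibler divergence in base 2 (in bits). -/
noncomputable def klDiv2 {α : Type*} [MeasurableSpace α] (μ ν : Measure α) : ℝ :=
  ∫ x, Real.logb 2 ((μ.rnDeriv ν x).toReal) ∂μ

/-- Mutual information (base 2) of two random variables: KL divergence of the joint law from
the product of the marginal laws. -/
noncomputable def mutualInfo {Ω α β : Type*} [MeasurableSpace Ω] [MeasurableSpace α]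
    [MeasurableSpace β] (P : Measure Ω) (X : Ω → α) (Y : Ω → β) : ℝ :=
  klDiv2 (P.map fun ω => (X ω, Y ω)) ((P.map X).prod (P.map Y))

/-- Conditional mutual information given a finite-valued random variable `B`:
`I(X;Y|B) = ∑ b, P(B = b) · I(X;Y)` computed under the conditional measure `P[|B = b]`. -/
noncomputable def condMutualInfo {Ω α β γ : Type*} [MeasurableSpace Ω] [MeasurableSpace α]
    [MeasurableSpace β] [MeasurableSpace γ] [Fintype γ] (P : Measure Ω) (X : Ω → α) (Y : Ω → β)
    (B : Ω → γ) : ℝ :=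
  ∑ b : γ, (P (B ⁻¹' {b})).toReal * mutualInfo (P[|B ⁻¹' {b}]) X Y

section Helpers

open InformationTheory
open scoped MeasureTheory

lemma klDiv2_eq_toReal {α : Type*} [MeasurableSpace α] (μ ν : Measure α)
    [IsProbabilityMeasure μ] [IsProbabilityMeasure ν] (h : μ ≪ ν) :
    klDiv2 μ ν = (klDiv μ ν).toReal / Real.log 2 := by
  rw [toReal_klDiv_of_measure_eq h (by simp)]
  unfold klDiv2 llr Real.logb
  rw [integral_div]

lemma klDiv_ne_top_of_le {α : Type*} [MeasurableSpace α] (μ ν : Measure α)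
    [IsProbabilityMeasure μ] [IsProbabilityMeasure ν] (C : ℝ≥0) (h : μ ≤ C • ν) :
    klDiv μ ν ≠ ∞ := by
  have hac : μ ≪ ν := Measure.absolutelyContinuous_of_le_smul (c := (C : ℝ≥0∞)) h
  refine klDiv_ne_top hac ?_
  rw [← integrable_klFun_rnDeriv_iff hac]
  have hb : ∀ᵐ x ∂ν, μ.rnDeriv ν x ≤ C := by
    refine ae_le_of_forall_setLIntegral_le_of_sigmaFinite (Measure.measurable_rnDeriv μ ν) ?_
    intro s hs _
    calc ∫⁻ x in s, μ.rnDeriv ν x ∂ν ≤ μ s := Measure.setLIntegral_rnDeriv_le s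
      _ ≤ (C • ν) s := h s
      _ = ∫⁻ x in s, C ∂ν := by rw [setLIntegral_const]; rfl
  obtain ⟨K, hK⟩ := (isCompact_Icc (a := (0 : ℝ)) (b := C)).exists_bound_of_continuousOn
    continuous_klFun.continuousOn
  refine Integrable.of_bound (C := K) ?_ ?_
  · exact (measurable_klFun.comp (Measure.measurable_rnDeriv μ ν).ennreal_toReal).aestronglyMeasurable
  · filter_upwards [hb] with x hx
    refine hK _ ⟨ENNReal.toReal_nonneg, ?_⟩
    exact ENNReal.toReal_le_coe_of_le_coe hx

lemma joint_le_smul_prod {Ω : Type*} [MeasurableSpace Ω] (Q : Measure Ω)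
    [IsProbabilityMeasure Q] {X : Ω → Bool} {Y : Ω → ℂ} (hX : Measurable X) (hY : Measurable Y) :
    ∃ C : ℝ≥0, Q.map (fun ω => (X ω, Y ω)) ≤ C • ((Q.map X).prod (Q.map Y)) := by
  classical
  have : IsProbabilityMeasure (Q.map X) := Measure.isProbabilityMeasure_map hX.aemeasurable
  have : IsProbabilityMeasure (Q.map Y) := Measure.isProbabilityMeasure_map hY.aemeasurable
  refine ⟨∑ b : Bool, (Q.map X {b}).toNNReal⁻¹, ?_⟩
  set C : ℝ≥0 := ∑ b : Bool, (Q.map X {b}).toNNReal⁻¹ with hC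
  refine Measure.le_iff.2 fun s hs => ?_
  have hsb : ∀ b : Bool, MeasurableSet {y : ℂ | (b, y) ∈ s} := fun b =>
    measurable_prodMk_left hs
  have key : ∀ b : Bool, Q (X ⁻¹' {b} ∩ Y ⁻¹' {y | (b, y) ∈ s}) ≤
      C * (Q.map X {b} * Q.map Y {y | (b, y) ∈ s}) := by
    intro b
    by_cases h0 : Q.map X {b} = 0
    · rw [Measure.map_apply hX (measurableSet_singleton b)] at h0
      rw [measure_mono_null Set.inter_subset_left h0]
      exact zero_le
    · have h1 : (1 : ℝ≥0∞) ≤ C * Q.map X {b} := by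
        have hne : Q.map X {b} ≠ ∞ := measure_ne_top _ _
        have : (Q.map X {b}).toNNReal⁻¹ ≤ C :=
          Finset.single_le_sum (f := fun b : Bool => (Q.map X {b}).toNNReal⁻¹)
            (fun _ _ => zero_le) (Finset.mem_univ b)
        calc (1 : ℝ≥0∞) = ((Q.map X {b}).toNNReal⁻¹ * (Q.map X {b}).toNNReal : ℝ≥0) := by
              rw [inv_mul_cancel₀]
              · simp
              · simp [ENNReal.toNNReal_eq_zero_iff, h0, hne]
          _ ≤ (C * (Q.map X {b}).toNNReal : ℝ≥0) := by
              exact_mod_cast mul_le_mul_left this _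
          _ = C * Q.map X {b} := by rw [ENNReal.coe_mul, ENNReal.coe_toNNReal hne]
      rw [← mul_assoc]
      calc _ ≤ Q (Y ⁻¹' {y | (b, y) ∈ s}) := measure_mono Set.inter_subset_right
        _ = 1 * Q.map Y {y | (b, y) ∈ s} := by rw [Measure.map_apply hY (hsb b), one_mul]
        _ ≤ _ := by gcongr
  have hsU : s = ⋃ b : Bool, ({b} ×ˢ {y | (b, y) ∈ s}) := by
    ext ⟨b, y⟩; simp
  have hL : Q.map (fun ω => (X ω, Y ω)) s = ∑ b : Bool, Q (X ⁻¹' {b} ∩ Y ⁻¹' {y | (b, y) ∈ s}) := by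
    conv_lhs => rw [hsU]
    rw [measure_iUnion, tsum_fintype]
    · refine Finset.sum_congr rfl fun b _ => ?_
      rw [Measure.map_apply (hX.prodMk hY) ((measurableSet_singleton b).prod (hsb b))]
      rfl
    · intro b b' hbb
      simp only [Function.onFun]
      rw [Set.disjoint_prod]
      left; simpa using hbb
    · exact fun b => (measurableSet_singleton b).prod (hsb b)
  have hR : ((Q.map X).prod (Q.map Y)) s =
      ∑ b : Bool, Q.map X {b} * Q.map Y {y | (b, y) ∈ s} := by
    conv_lhs => rw [hsU]
    rw [measure_iUnion, tsum_fintype]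
    · refine Finset.sum_congr rfl fun b _ => ?_
      rw [Measure.prod_prod]
    · intro b b' hbb
      simp only [Function.onFun]
      rw [Set.disjoint_prod]
      left; simpa using hbb
    · exact fun b => (measurableSet_singleton b).prod (hsb b)
  rw [Measure.smul_apply, hL, hR, ENNReal.smul_def, smul_eq_mul, Finset.mul_sum]
  exact Finset.sum_le_sum fun b _ => key b

lemma mutualInfo_le_of_degraded {Ω : Type*} [MeasurableSpace Ω] (Q : Measure Ω)
    [IsProbabilityMeasure Q] {X : Ω → Bool} {Y₁ Y₂ : Ω → ℂ} (hX : Measurable X)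
    (hY₁ : Measurable Y₁) (hY₂ : Measurable Y₂) (γ : Measure ℂ) [IsProbabilityMeasure γ]
    (f : ℂ × ℂ → ℂ) (hf : Measurable f)
    (h : Q.map (fun ω => (X ω, Y₂ ω)) =
      ((Q.map (fun ω => (X ω, Y₁ ω))).prod γ).map (fun p => (p.1.1, f (p.1.2, p.2)))) :
    mutualInfo Q X Y₂ ≤ mutualInfo Q X Y₁ := by
  have : IsProbabilityMeasure (Q.map X) := Measure.isProbabilityMeasure_map hX.aemeasurable
  have : IsProbabilityMeasure (Q.map Y₁) := Measure.isProbabilityMeasure_map hY₁.aemeasurable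
  have : IsProbabilityMeasure (Q.map Y₂) := Measure.isProbabilityMeasure_map hY₂.aemeasurable
  have hXY₁ := hX.prodMk hY₁
  have hXY₂ := hX.prodMk hY₂
  have : IsProbabilityMeasure (Q.map (fun ω => (X ω, Y₁ ω))) :=
    Measure.isProbabilityMeasure_map hXY₁.aemeasurable
  have : IsProbabilityMeasure (Q.map (fun ω => (X ω, Y₂ ω))) :=
    Measure.isProbabilityMeasure_map hXY₂.aemeasurable
  obtain ⟨C₁, hC₁⟩ := joint_le_smul_prod Q hX hY₁
  obtain ⟨C₂, hC₂⟩ := joint_le_smul_prod Q hX hY₂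
  unfold mutualInfo
  rw [klDiv2_eq_toReal _ _ (Measure.absolutelyContinuous_of_le_smul (c := (C₁ : ℝ≥0∞)) hC₁),
    klDiv2_eq_toReal _ _ (Measure.absolutelyContinuous_of_le_smul (c := (C₂ : ℝ≥0∞)) hC₂)]
  refine div_le_div_of_nonneg_right ?_ (Real.log_nonneg (by norm_num))
  refine ENNReal.toReal_mono (klDiv_ne_top_of_le _ _ C₁ hC₁) ?_
  have hg : Measurable (fun p : (Bool × ℂ) × ℂ => (p.1.1, f (p.1.2, p.2))) := by fun_prop
  have hm : Q.map Y₂ = ((Q.map Y₁).prod γ).map f := by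
    have e1 : Q.map Y₂ = (Q.map (fun ω => (X ω, Y₂ ω))).map Prod.snd := by
      rw [Measure.map_map measurable_snd hXY₂]; rfl
    have e2 : Q.map Y₁ = (Q.map (fun ω => (X ω, Y₁ ω))).map Prod.snd := by
      rw [Measure.map_map measurable_snd hXY₁]; rfl
    have e3 : (Q.map Y₁).prod γ = ((Q.map (fun ω => (X ω, Y₁ ω))).prod γ).map
        (Prod.map Prod.snd id) := by
      rw [← Measure.map_prod_map _ _ measurable_snd measurable_id, Measure.map_id, ← e2]
    rw [e1, h, e3, Measure.map_map measurable_snd hg, Measure.map_map hf (by fun_prop)]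
    rfl
  have hp : (Q.map X).prod (Q.map Y₂) =
      (((Q.map X).prod (Q.map Y₁)).prod γ).map (fun p => (p.1.1, f (p.1.2, p.2))) := by
    conv_lhs => rw [hm, ← Measure.map_id (μ := Q.map X)]
    rw [Measure.map_prod_map _ _ measurable_id hf, ← Measure.prodAssoc_prod,
      Measure.map_map (by fun_prop) (by fun_prop)]
    rfl
  rw [h, hp]
  refine (klDiv_map_le _ _ hg).trans ?_
  rw [← Measure.compProd_const, ← Measure.compProd_const, klDiv_compProd_left]

lemma complexGaussian_eq_conv (v : ℝ≥0) : complexGaussian v =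
    ((gaussianReal 0 (v / 2)).map (fun x : ℝ => (x : ℂ))) ∗
      ((gaussianReal 0 (v / 2)).map (fun x : ℝ => (x : ℂ) * Complex.I)) := by
  unfold complexGaussian Measure.conv
  rw [Measure.map_prod_map _ _ (by fun_prop) (by fun_prop),
    Measure.map_map (by fun_prop) (by fun_prop)]
  rfl

instance isProb_complexGaussian (v : ℝ≥0) : IsProbabilityMeasure (complexGaussian v) :=
  Measure.isProbabilityMeasure_map (by fun_prop)

lemma gaussian_line (L : ℝ →+ ℂ) (hL : Measurable L) (v : ℝ≥0) (c : ℝ) (hc : c ^ 2 ≤ 1)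
    (hLc : ∀ x : ℝ, (c : ℂ) * L x = L (c * x)) :
    ((gaussianReal 0 (v / 2)).map L).map (fun z => (c : ℂ) * z) ∗
      (gaussianReal 0 ((NNReal.mk (1 - c ^ 2) (by linarith) * v) / 2)).map L =
      (gaussianReal 0 (v / 2)).map L := by
  have e : ((gaussianReal 0 (v / 2)).map L).map (fun z => (c : ℂ) * z) =
      ((gaussianReal 0 (v / 2)).map (c * ·)).map L := by
    rw [Measure.map_map (by fun_prop) hL, Measure.map_map hL (by fun_prop)]
    congr 1
    funext x
    exact hLc x
  rw [e, gaussianReal_map_const_mul, ← Measure.map_conv_addMonoidHom L hL,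
    gaussianReal_conv_gaussianReal]
  congr 2
  · simp
  · ext
    have hv : ((NNReal.mk (1 - c ^ 2) (by linarith) * v : ℝ≥0) : ℝ) = (1 - c ^ 2) * v :=
      NNReal.coe_mul _ _
    have hw : (((NNReal.mk (c ^ 2) (sq_nonneg _)) * (v / 2) : ℝ≥0) : ℝ) = c ^ 2 * (v / 2) :=
      NNReal.coe_mul _ _
    rw [NNReal.coe_add, NNReal.coe_div, NNReal.coe_div, hw]
    rw [hv]
    simp only [NNReal.coe_ofNat]
    ring

lemma conv_four (A B A' B' : Measure ℂ) [SFinite A] [SFinite B] [SFinite A'] [SFinite B'] :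
    (A ∗ B) ∗ (A' ∗ B') = (A ∗ A') ∗ (B ∗ B') := by
  rw [Measure.conv_assoc, Measure.conv_assoc, ← Measure.conv_assoc B A' B',
    Measure.conv_comm B A', Measure.conv_assoc A' B B']

lemma complexGaussian_degrade (v : ℝ≥0) (c : ℝ) (hc : c ^ 2 ≤ 1) :
    ((complexGaussian v).prod (complexGaussian (NNReal.mk (1 - c ^ 2) (by linarith) * v))).map
      (fun p => (c : ℂ) * p.1 + p.2) = complexGaussian v := by
  have h1 := gaussian_line (Complex.ofRealHom : ℝ →+ ℂ) (by exact Complex.measurable_ofReal) v c hc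
    (by intro x; simp)
  have h2 := gaussian_line ((AddMonoidHom.mulRight Complex.I).comp (Complex.ofRealHom : ℝ →+ ℂ))
    (by exact Complex.measurable_ofReal.mul_const _) v c hc (by intro x; simp [mul_assoc])
  set G' := complexGaussian (NNReal.mk (1 - c ^ 2) (by linarith) * v) with hG'
  have e : ((complexGaussian v).prod G').map (fun p => (c : ℂ) * p.1 + p.2) =
      ((complexGaussian v).map (fun z => (c : ℂ) * z)) ∗ G' := by
    unfold Measure.conv
    conv_rhs => rw [← Measure.map_id (μ := G')]
    rw [Measure.map_prod_map _ _ (by fun_prop) (by fun_prop),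
      Measure.map_map (by fun_prop) (by fun_prop)]
    rfl
  have e2 : (complexGaussian v).map (fun z => (c : ℂ) * z) =
      (((gaussianReal 0 (v / 2)).map (fun x : ℝ => (x : ℂ))).map (fun z => (c : ℂ) * z)) ∗
      (((gaussianReal 0 (v / 2)).map (fun x : ℝ => (x : ℂ) * Complex.I)).map
        (fun z => (c : ℂ) * z)) := by
    rw [complexGaussian_eq_conv]
    exact Measure.map_conv_addMonoidHom (AddMonoidHom.mulLeft (c : ℂ))
      (by exact measurable_const_mul (c : ℂ))
  rw [e, e2, hG', complexGaussian_eq_conv, complexGaussian_eq_conv v]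
  have h1' : ((gaussianReal 0 (v / 2)).map (fun x : ℝ => (x : ℂ))).map (fun z => (c : ℂ) * z) ∗
      (gaussianReal 0 ((NNReal.mk (1 - c ^ 2) (by linarith) * v) / 2)).map (fun x : ℝ => (x : ℂ)) =
      (gaussianReal 0 (v / 2)).map (fun x : ℝ => (x : ℂ)) := h1
  have h2' : ((gaussianReal 0 (v / 2)).map (fun x : ℝ => (x : ℂ) * Complex.I)).map
        (fun z => (c : ℂ) * z) ∗
      (gaussianReal 0 ((NNReal.mk (1 - c ^ 2) (by linarith) * v) / 2)).map
        (fun x : ℝ => (x : ℂ) * Complex.I) =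
      (gaussianReal 0 (v / 2)).map (fun x : ℝ => (x : ℂ) * Complex.I) := h2
  conv_rhs => rw [← h1', ← h2']
  exact conv_four _ _ _ _

end Helpers

/-!
STATEMENT 4: Amplifying a hierarchical constellation does not decrease any conditional per-bit
low-priority mutual information at a fixed high-priority label: for every `ρ ≥ 1`, `σ² > 0`,
index `j` and `b_H`, `I(B_L^j ; ρZ + N | B_H = b_H) ≥ I(B_L^j ; Z + N | B_H = b_H)`, computed
under the conditional measure given `B_H = b_H`, with `N` complex Gaussian of variance `σ²`
independent of the labels.
-/
theorem hm_amplify_LP_bit_MI_cond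
    {Ω : Type*} [MeasurableSpace Ω] (P : Measure Ω) [IsProbabilityMeasure P]
    (mH mL : ℕ) (hmH : 0 < mH) (hmL : 0 < mL)
    (μc : (Fin mH → Bool) × (Fin mL → Bool) → ℂ)
    (BH : Ω → Fin mH → Bool) (BL : Ω → Fin mL → Bool)
    (hBH : Measurable BH) (hBL : Measurable BL)
    (hUnif : P.map (fun ω => (BH ω, BL ω)) =
      (PMF.uniformOfFintype ((Fin mH → Bool) × (Fin mL → Bool))).toMeasure)
    (σ2 : ℝ≥0) (hσ2 : 0 < σ2)
    (N : Ω → ℂ) (hNMeas : Measurable N)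
    (lawN : P.map N = complexGaussian σ2)
    (hIndepN : IndepFun (fun ω => (BH ω, BL ω)) N P)
    (ρ : ℝ) (hρ : 1 ≤ ρ) (j : Fin mL) (bH : Fin mH → Bool) :
    mutualInfo (P[|BH ⁻¹' {bH}]) (fun ω => BL ω j)
        (fun ω => (ρ : ℂ) * μc (BH ω, BL ω) + N ω) ≥
      mutualInfo (P[|BH ⁻¹' {bH}]) (fun ω => BL ω j)
        (fun ω => μc (BH ω, BL ω) + N ω) := by
  have hBpair : Measurable (fun ω => (BH ω, BL ω)) := hBH.prodMk hBL
  have hB0 : P (BH ⁻¹' {bH}) ≠ 0 := by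
    intro h0
    have h1 : P.map (fun ω => (BH ω, BL ω)) {(bH, fun _ => false)} = 0 := by
      rw [Measure.map_apply hBpair (measurableSet_singleton _)]
      refine measure_mono_null (fun ω hω => ?_) h0
      simp only [Set.mem_preimage, Set.mem_singleton_iff, Prod.mk.injEq] at hω ⊢
      exact hω.1
    rw [hUnif, PMF.toMeasure_apply_singleton _ _ (measurableSet_singleton _)] at h1
    simp only [PMF.uniformOfFintype_apply, ENNReal.inv_eq_zero] at h1
    exact ENNReal.natCast_ne_top _ h1
  have hBmeas : MeasurableSet (BH ⁻¹' {bH}) := hBH (measurableSet_singleton _)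
  set Q := P[|BH ⁻¹' {bH}] with hQ
  have hQp : IsProbabilityMeasure Q := cond_isProbabilityMeasure hB0
  have hGp : IsProbabilityMeasure (Q.map BL) := Measure.isProbabilityMeasure_map hBL.aemeasurable
  have hlaw : Q.map (fun ω => (BL ω, N ω)) = (Q.map BL).prod (complexGaussian σ2) := by
    symm
    refine Measure.prod_eq fun s t hs ht => ?_
    rw [Measure.map_apply (hBL.prodMk hNMeas) (hs.prod ht), Measure.map_apply hBL hs, ← lawN,
      Measure.map_apply hNMeas ht, hQ, cond_apply hBmeas, cond_apply hBmeas, mul_assoc]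
    congr 1
    have := hIndepN.measure_inter_preimage_eq_mul ({bH} ×ˢ s) t
      ((measurableSet_singleton bH).prod hs) ht
    rw [show BH ⁻¹' {bH} ∩ BL ⁻¹' s = (fun ω => (BH ω, BL ω)) ⁻¹' ({bH} ×ˢ s) by
      ext ω; simp, ← this]
    congr 1
    ext ω
    simp [and_assoc]
  have hae : ∀ᵐ ω ∂Q, BH ω = bH := ae_cond_mem hBmeas
  have hμ : Measurable μc := measurable_of_finite μc
  have hμ' : Measurable (fun a => μc (bH, a)) := measurable_of_finite _
  have hj : Measurable (fun a : Fin mL → Bool => a j) := measurable_pi_apply j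
  have hX : Measurable (fun ω => BL ω j) := hj.comp hBL
  have hZ : Measurable (fun ω => μc (BH ω, BL ω)) := hμ.comp hBpair
  have joint : ∀ r : ℂ, Q.map (fun ω => (BL ω j, r * μc (BH ω, BL ω) + N ω)) =
      ((Q.map BL).prod (complexGaussian σ2)).map (fun p => (p.1 j, r * μc (bH, p.1) + p.2)) := by
    intro r
    rw [← hlaw, Measure.map_map _ (hBL.prodMk hNMeas)]
    · refine Measure.map_congr ?_
      filter_upwards [hae] with ω hω
      simp [hω]
    · exact (hj.comp measurable_fst).prodMk
        (((hμ'.comp measurable_fst).const_mul r).add measurable_snd)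
  have hρ0 : (ρ : ℂ) ≠ 0 := by
    have : ρ ≠ 0 := by linarith
    exact_mod_cast this
  have hc : (ρ⁻¹) ^ 2 ≤ 1 := by
    have h1 : ρ⁻¹ ≤ 1 := inv_le_one_of_one_le₀ hρ
    have h2 : 0 ≤ ρ⁻¹ := by positivity
    nlinarith
  refine mutualInfo_le_of_degraded Q hX ((hZ.const_mul _).add hNMeas) (hZ.add hNMeas)
    (complexGaussian (NNReal.mk (1 - (ρ⁻¹) ^ 2) (by linarith) * σ2))
    (fun p => ((ρ⁻¹ : ℝ) : ℂ) * p.1 + p.2) (by fun_prop) ?_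
  have j1 := joint 1
  simp only [one_mul] at j1
  rw [j1, joint (ρ : ℂ)]
  set G' := complexGaussian (NNReal.mk (1 - (ρ⁻¹) ^ 2) (by linarith) * σ2) with hG'
  have hdeg : ((complexGaussian σ2).prod G').map
      (fun p => ((ρ⁻¹ : ℝ) : ℂ) * p.1 + p.2) = complexGaussian σ2 :=
    complexGaussian_degrade σ2 ρ⁻¹ hc
  have hm1 : Measurable (fun p : (Fin mL → Bool) × ℂ => (p.1 j, (ρ : ℂ) * μc (bH, p.1) + p.2)) :=
    (hj.comp measurable_fst).prodMk
        (((hμ'.comp measurable_fst).const_mul _).add measurable_snd)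
  have hm2 : Measurable (fun p : (Fin mL → Bool) × ℂ => (p.1 j, μc (bH, p.1) + p.2)) :=
    (hj.comp measurable_fst).prodMk ((hμ'.comp measurable_fst).add measurable_snd)
  conv_lhs => rw [← hdeg, ← Measure.map_id (μ := Q.map BL)]
  conv_rhs => rw [← Measure.map_id (μ := G')]
  rw [Measure.map_prod_map _ _ measurable_id (by fun_prop), ← Measure.prodAssoc_prod,
    Measure.map_prod_map _ _ hm1 measurable_id,
    Measure.map_map hm2 (by fun_prop),
    Measure.map_map (hm2.comp (by fun_prop)) (by fun_prop),
    Measure.map_map (by fun_prop) (hm1.prodMap measurable_id)]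
  congr 1
  funext p
  simp [MeasurableEquiv.prodAssoc, Equiv.prodAssoc]
  field_simp
  ring
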